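/- The section at the level-two vertex 11 of the commutator subgroup of the Basilica group contains all of B: for every g ∈ B there exists h in the commutator subgroup ⁅B, B⁆ such that h (true :: true :: w) = true :: true :: g w for all w : List Bool. -/

import Mathlib

/-!
Writing `(g, h)` for the permutation acting as `g` below `false` and as `h` below `true`, one has
`a = (1, b)`, `b⁻¹ a b = (b, 1)` and `b² = (a, a)`. Hence `u = ⁅a, b⁻¹⁆ = (b⁻¹, b)` lies in the
commutator subgroup, and therefore so do `u² = (b⁻², b²)` and `⁅b², u⁆ = (⁅a, b⁻¹⁆, ⁅a, b⁆)`.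
Below `true`, `b²` acts as `a` and `⁅a, b⁆` acts as `b`, so `u²` and `⁅b², u⁆` have sections `a`
and `b` at the vertex `11`. Elements fixing `11` have multiplicative sections there, so every
element of `B` occurs as such a section.
-/

namespace Basilica

mutual
  /-- Underlying map of the Basilica generator `a`. -/
  def aF : List Bool → List Bool
    | [] => []
    | false :: w => false :: w
    | true :: w => true :: bF w
  /-- Underlying map of the Basilica generator `b`. -/
  def bF : List Bool → List Bool
    | [] => []
    | false :: w => true :: w
    | true :: w => false :: aF w
end

mutual
  /-- Inverse of `aF`. -/
  def aI : List Bool → List Bool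
    | [] => []
    | false :: w => false :: w
    | true :: w => true :: bI w
  /-- Inverse of `bF`. -/
  def bI : List Bool → List Bool
    | [] => []
    | false :: w => true :: aI w
    | true :: w => false :: w
end

theorem basilica_inv : ∀ w : List Bool,
    aI (aF w) = w ∧ bI (bF w) = w ∧ aF (aI w) = w ∧ bF (bI w) = w := by
  intro w
  induction w with
  | nil => simp [aF, bF, aI, bI]
  | cons x w ih =>
    cases x <;>
      simp [aF, bF, aI, bI, ih.1, ih.2.1, ih.2.2.1, ih.2.2.2]

/-- The Basilica generator `a` as a permutation of the binary tree `List Bool`: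
`a [] = []`, `a (false :: w) = false :: w`, `a (true :: w) = true :: b w`. -/
def a : Equiv.Perm (List Bool) :=
  ⟨aF, aI, fun w => (basilica_inv w).1, fun w => (basilica_inv w).2.2.1⟩

/-- The Basilica generator `b` as a permutation of the binary tree `List Bool`:
`b [] = []`, `b (false :: w) = true :: w`, `b (true :: w) = false :: a w`. -/
def b : Equiv.Perm (List Bool) :=
  ⟨bF, bI, fun w => (basilica_inv w).2.1, fun w => (basilica_inv w).2.2.2⟩

/-- Underlying map of the pair `(g, h)` acting on the two subtrees. -/
def pairF (g h : List Bool → List Bool) : List Bool → List Bool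
  | [] => []
  | false :: w => false :: g w
  | true :: w => true :: h w

/-- The permutation of `List Bool` acting as `g` on the subtree below `false`
and as `h` on the subtree below `true`, fixing the root. -/
def pair (g h : Equiv.Perm (List Bool)) : Equiv.Perm (List Bool) :=
  ⟨pairF g h, pairF g.symm h.symm,
    fun w => by cases w with
      | nil => rfl
      | cons x w => cases x <;> simp [pairF],
    fun w => by cases w with
      | nil => rfl
      | cons x w => cases x <;> simp [pairF]⟩

/-- The Basilica group: the subgroup of `Equiv.Perm (List Bool)` generated by `a` and `b`. -/
def B : Subgroup (Equiv.Perm (List Bool)) := Subgroup.closure {a, b}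

end Basilica

namespace Basilica

open scoped commutatorElement

theorem commutator_eq_pair : ⁅a, b⁻¹⁆ = pair b⁻¹ b := by
  ext1 w
  rcases w with _ | ⟨_ | _, w⟩ <;>
    simp [commutatorElement_def, Equiv.Perm.mul_apply, Equiv.Perm.inv_def, a, b, pair, pairF,
      aF, bF, aI, bI, basilica_inv]

theorem b_sq_eq_pair : b ^ 2 = pair a a := by
  ext1 w
  rcases w with _ | ⟨_ | _, w⟩ <;>
    simp [pow_two, Equiv.Perm.mul_apply, a, b, pair, pairF, bF]

theorem commutator_mem : ⁅a, b⁻¹⁆ ∈ ⁅B, B⁆ :=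
  Subgroup.commutator_mem_commutator (Subgroup.subset_closure (by simp))
    (inv_mem (Subgroup.subset_closure (by simp)))

theorem exists_section_a :
    ∃ h ∈ ⁅B, B⁆, ∀ w : List Bool, h (true :: true :: w) = true :: true :: a w := by
  refine ⟨⁅a, b⁻¹⁆ ^ 2, pow_mem commutator_mem 2, fun w => ?_⟩
  rw [commutator_eq_pair]
  simp [pow_two, Equiv.Perm.mul_apply, a, b, pair, pairF, bF]

theorem exists_section_b :
    ∃ h ∈ ⁅B, B⁆, ∀ w : List Bool, h (true :: true :: w) = true :: true :: b w := by
  have hb : b ∈ B := Subgroup.subset_closure (by simp)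
  have hle : ⁅B, B⁆ ≤ B := Subgroup.commutator_le.2 fun x hx y hy => by
    rw [commutatorElement_def]
    exact mul_mem (mul_mem (mul_mem hx hy) (inv_mem hx)) (inv_mem hy)
  refine ⟨⁅b ^ 2, ⁅a, b⁻¹⁆⁆,
    Subgroup.commutator_mem_commutator (pow_mem hb 2) (hle commutator_mem), fun w => ?_⟩
  rw [commutator_eq_pair, b_sq_eq_pair]
  simp [commutatorElement_def, Equiv.Perm.mul_apply, Equiv.Perm.inv_def, a, b, pair, pairF,
    aF, bF, aI, bI]

end Basilica

open Basilica in
/-- The section at the level-two vertex `11` of the commutator subgroup of the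
Basilica group contains all of `B`. -/
theorem basilica_commutator_section (g : Equiv.Perm (List Bool)) (hg : g ∈ B) :
    ∃ h ∈ ⁅B, B⁆, ∀ w : List Bool, h (true :: true :: w) = true :: true :: g w := by
  induction hg using Subgroup.closure_induction with
  | mem x hx =>
    rcases hx with rfl | rfl
    · exact exists_section_a
    · exact exists_section_b
  | one => exact ⟨1, one_mem _, fun w => rfl⟩
  | mul x y _ _ hx hy =>
    obtain ⟨h, hh, hw⟩ := hx
    obtain ⟨k, hk, kw⟩ := hy
    exact ⟨h * k, mul_mem hh hk, fun w => by simp [Equiv.Perm.mul_apply, hw, kw]⟩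
  | inv x _ hx =>
    obtain ⟨h, hh, hw⟩ := hx
    exact ⟨h⁻¹, inv_mem hh, fun w => by rw [Equiv.Perm.inv_eq_iff_eq, hw]; simp⟩
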